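/- For every compact set K ⊆ U × (a,b) there exist N₀ ∈ ℕ and C > 0 such that for every integer N ≥ N₀ one has ĝ₀₀ > 0 on a neighbourhood of K, and at every point of K and for all i ∈ {1, …, n}: |∇̂²_{i0}(N/(2τ)) − (1/2) ∂_{x^i} R| ≤ C/N, where N/(2τ) denotes the function (x,τ) ↦ N/(2τ) on Û. (Proposition 2.2, mixed Hessian components.) -/

import Mathlib

/-!
Write `X = 2τ²R − nτ`. Then `ĝ₀₀ = (N + X)/(2τ³)`, and `X` is bounded on the whole of `U × (a,b)`
by a constant `M`, because `R` and `τ` are; hence `ĝ₀₀ > 0` everywhere as soon as `N > M`.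

Since `N/(2τ)` depends on `τ` only and `ĝ` is block diagonal, the mixed Hessian component is
`(N/(2τ²)) Γ̂⁰_{i0} = (N/(2τ²)) · (1/2) ĝ₀₀⁻¹ ∂_iR/τ = (1/2) ∂_iR · N/(N + X)`.
It differs from `(1/2) ∂_iR` by `−(1/2) ∂_iR · X/(N + X)`, which is at most `|∂_iR| M/N` in
absolute value once `N ≥ 2M`. The scalar curvature is smooth, being built from the entries of `g`,
the inverse matrix (Cramer's rule) and finitely many derivatives, so `∂_iR` is bounded on the
compact set `K`.
-/

noncomputable section

open scoped BigOperators

namespace CanonicalSoliton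

/-- Space-time `ℝⁿ × ℝ`, a point being `(x, τ)`. -/
abbrev E (n : ℕ) := (Fin n → ℝ) × ℝ

variable {n : ℕ}

/-- Spatial partial derivative `∂_{xⁱ}`. -/
def pdx (i : Fin n) (f : E n → ℝ) (p : E n) : ℝ :=
  fderiv ℝ f p (Pi.single i 1, 0)

/-- Time partial derivative `∂_τ`. -/
def pdt (f : E n → ℝ) (p : E n) : ℝ :=
  fderiv ℝ f p (0, 1)

/-- Coordinate directions on space-time; the index `0` is the time direction `∂/∂τ`,
and the index `i.succ` is the spatial direction `∂/∂xⁱ`. -/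
def dir (a : Fin (n + 1)) : E n :=
  Fin.cases ((0 : Fin n → ℝ), (1 : ℝ)) (fun i => (Pi.single i 1, (0 : ℝ))) a

/-- Partial derivative `∂_{x^a}` on space-time, `x⁰ = τ` being time. -/
def pd (a : Fin (n + 1)) (f : E n → ℝ) (p : E n) : ℝ :=
  fderiv ℝ f p (dir a)

variable (g : E n → Matrix (Fin n) (Fin n) ℝ)

/-- Entries `g^{ij}` of the inverse metric. -/
def ginv (p : E n) : Matrix (Fin n) (Fin n) ℝ := (g p)⁻¹

/-- Christoffel symbols `Γ^i_{jk} = (1/2) g^{il} (∂_{x^j} g_{kl} + ∂_{x^k} g_{jl} − ∂_{x^l} g_{jk})`. -/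
def Chr (i j k : Fin n) (p : E n) : ℝ :=
  (1 / 2) * ∑ l, ginv g p i l *
    (pdx j (fun q => g q k l) p + pdx k (fun q => g q j l) p - pdx l (fun q => g q j k) p)

/-- Ricci tensor `R_{jk} = ∂_{x^i} Γ^i_{jk} − ∂_{x^k} Γ^i_{ji} + Γ^i_{jk} Γ^l_{il} − Γ^l_{ji} Γ^i_{lk}`. -/
def Ric (j k : Fin n) (p : E n) : ℝ :=
  (∑ i, pdx i (Chr g i j k) p) - pdx k (fun q => ∑ i, Chr g i j i q) p
    + (∑ i, ∑ l, Chr g i j k p * Chr g l i l p)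
    - ∑ i, ∑ l, Chr g l j i p * Chr g i l k p

/-- Ricci tensor with one index raised: `R^i_j := g^{ik} R_{kj}`. -/
def RicUp (i j : Fin n) (p : E n) : ℝ := ∑ k, ginv g p i k * Ric g k j p

/-- Scalar curvature `R := g^{jk} R_{jk}`. -/
def scal (p : E n) : ℝ := ∑ j, ∑ k, ginv g p j k * Ric g j k p

/-- `R_τ := ∂_τ R`. -/
def scalτ (p : E n) : ℝ := pdt (scal g) p

/-- Entries of the canonical shrinking-soliton metric `ĝ`:
`ĝ_{ij} = g_{ij}/τ`, `ĝ₀₀ = N/(2τ³) + R/τ − n/(2τ²)`, `ĝ_{0i} = 0`. -/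
def hatg (N : ℕ) (a b : Fin (n + 1)) (p : E n) : ℝ :=
  Fin.cases
    (Fin.cases ((N : ℝ) / (2 * p.2 ^ 3) + scal g p / p.2 - (n : ℝ) / (2 * p.2 ^ 2))
      (fun _ => 0) b)
    (fun i => Fin.cases (0 : ℝ) (fun j => g p i j / p.2) b) a

/-- Entries of the inverse of `ĝ`: `ĝ^{ij} = τ g^{ij}`, `ĝ^{00} = (ĝ₀₀)⁻¹`, `ĝ^{0i} = 0`. -/
def hatginv (N : ℕ) (a b : Fin (n + 1)) (p : E n) : ℝ :=
  Fin.cases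
    (Fin.cases (hatg g N 0 0 p)⁻¹ (fun _ => 0) b)
    (fun i => Fin.cases (0 : ℝ) (fun j => p.2 * ginv g p i j) b) a

/-- Christoffel symbols of `ĝ`:
`Γ̂^a_{bc} = (1/2) ĝ^{ad} (∂_{x^b} ĝ_{cd} + ∂_{x^c} ĝ_{bd} − ∂_{x^d} ĝ_{bc})`. -/
def hatChr (N : ℕ) (a b c : Fin (n + 1)) (p : E n) : ℝ :=
  (1 / 2) * ∑ d, hatginv g N a d p *
    (pd b (hatg g N c d) p + pd c (hatg g N b d) p - pd d (hatg g N b c) p)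

/-- Ricci tensor of `ĝ`:
`R̂_{ab} = ∂_{x^c} Γ̂^c_{ab} − ∂_{x^b} Γ̂^c_{ac} + Γ̂^c_{ab} Γ̂^d_{cd} − Γ̂^d_{ac} Γ̂^c_{bd}`. -/
def hatRic (N : ℕ) (a b : Fin (n + 1)) (p : E n) : ℝ :=
  (∑ c, pd c (hatChr g N c a b) p) - pd b (fun q => ∑ c, hatChr g N c a c q) p
    + (∑ c, ∑ d, hatChr g N c a b p * hatChr g N d c d p)
    - ∑ c, ∑ d, hatChr g N d a c p * hatChr g N c b d p

/-- Hessian with respect to `ĝ`: `∇̂²_{ab} f = ∂_{x^a} ∂_{x^b} f − (∂_{x^c} f) Γ̂^c_{ab}`. -/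
def hatHess (N : ℕ) (f : E n → ℝ) (a b : Fin (n + 1)) (p : E n) : ℝ :=
  pd a (fun q => pd b f q) p - ∑ c, pd c f p * hatChr g N c a b p

end CanonicalSoliton

namespace CanonicalSoliton

section Smoothness

variable {n : ℕ} {S : Set (E n)} {g : E n → Matrix (Fin n) (Fin n) ℝ}

lemma contDiffOn_pdx (hS : IsOpen S) {f : E n → ℝ} (hf : ContDiffOn ℝ (⊤ : ℕ∞) f S) (i : Fin n) :
    ContDiffOn ℝ (⊤ : ℕ∞) (pdx i f) S :=
  (hf.fderiv_of_isOpen hS (by norm_cast)).clm_apply contDiffOn_const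

lemma contDiffOn_det {A : E n → Matrix (Fin n) (Fin n) ℝ}
    (hA : ∀ i j, ContDiffOn ℝ (⊤ : ℕ∞) (fun p => A p i j) S) :
    ContDiffOn ℝ (⊤ : ℕ∞) (fun p => (A p).det) S := by
  simp only [Matrix.det_apply']
  exact ContDiffOn.sum fun σ _ => contDiffOn_const.mul (contDiffOn_prod fun i _ => hA _ _)

lemma contDiffOn_ginv (hg : ∀ i j, ContDiffOn ℝ (⊤ : ℕ∞) (fun p => g p i j) S)
    (hpos : ∀ p ∈ S, (g p).PosDef) (i j : Fin n) :
    ContDiffOn ℝ (⊤ : ℕ∞) (fun p => ginv g p i j) S := by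
  have h : (fun p => ginv g p i j) =
      fun p => ((g p).det)⁻¹ * ((g p).updateRow j (Pi.single i 1)).det := by
    funext p
    simp [ginv, Matrix.inv_def, Matrix.adjugate_apply]
  rw [h]
  refine ((contDiffOn_det hg).inv fun p hp => (hpos p hp).det_pos.ne').mul (contDiffOn_det ?_)
  intro k l
  by_cases hk : k = j
  · subst hk
    simpa using contDiffOn_const
  · simpa [Matrix.updateRow_ne hk] using hg k l

lemma contDiffOn_Chr (hS : IsOpen S) (hg : ∀ i j, ContDiffOn ℝ (⊤ : ℕ∞) (fun p => g p i j) S)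
    (hpos : ∀ p ∈ S, (g p).PosDef) (i j k : Fin n) :
    ContDiffOn ℝ (⊤ : ℕ∞) (Chr g i j k) S :=
  contDiffOn_const.mul <| ContDiffOn.sum fun l _ => (contDiffOn_ginv hg hpos i l).mul <|
    ((contDiffOn_pdx hS (hg k l) j).add (contDiffOn_pdx hS (hg j l) k)).sub
      (contDiffOn_pdx hS (hg j k) l)

lemma contDiffOn_Ric (hS : IsOpen S) (hg : ∀ i j, ContDiffOn ℝ (⊤ : ℕ∞) (fun p => g p i j) S)
    (hpos : ∀ p ∈ S, (g p).PosDef) (j k : Fin n) :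
    ContDiffOn ℝ (⊤ : ℕ∞) (Ric g j k) S := by
  have hC := contDiffOn_Chr hS hg hpos
  refine ContDiffOn.sub (ContDiffOn.add (ContDiffOn.sub ?_ ?_) ?_) ?_
  · exact ContDiffOn.sum fun i _ => contDiffOn_pdx hS (hC i j k) i
  · exact contDiffOn_pdx hS (ContDiffOn.sum fun i _ => hC i j i) k
  · exact ContDiffOn.sum fun i _ => ContDiffOn.sum fun l _ => (hC i j k).mul (hC l i l)
  · exact ContDiffOn.sum fun i _ => ContDiffOn.sum fun l _ => (hC l j i).mul (hC i l k)

lemma contDiffOn_scal (hS : IsOpen S) (hg : ∀ i j, ContDiffOn ℝ (⊤ : ℕ∞) (fun p => g p i j) S)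
    (hpos : ∀ p ∈ S, (g p).PosDef) : ContDiffOn ℝ (⊤ : ℕ∞) (scal g) S :=
  ContDiffOn.sum fun j _ => ContDiffOn.sum fun k _ =>
    (contDiffOn_ginv hg hpos j k).mul (contDiffOn_Ric hS hg hpos j k)

end Smoothness

section Hessian

variable {n : ℕ} {g : E n → Matrix (Fin n) (Fin n) ℝ}

lemma pd_succ_comp_snd {h : ℝ → ℝ} {p : E n} (hh : DifferentiableAt ℝ h p.2) (i : Fin n) :
    pd i.succ (fun q : E n => h q.2) p = 0 := by
  have := (hh.hasFDerivAt.comp p (hasFDerivAt_snd (𝕜 := ℝ) (p := p))).fderiv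
  change fderiv ℝ (h ∘ Prod.snd) p _ = 0
  rw [this]
  simp [dir]

lemma pd_zero_comp_snd {h : ℝ → ℝ} {h' : ℝ} {p : E n} (hh : HasDerivAt h h' p.2) :
    pd 0 (fun q : E n => h q.2) p = h' := by
  have := (hh.hasFDerivAt.comp p (hasFDerivAt_snd (𝕜 := ℝ) (p := p))).fderiv
  change fderiv ℝ (h ∘ Prod.snd) p _ = h'
  rw [this]
  simp [dir]

lemma hasDerivAt_potential (N : ℕ) {t : ℝ} (ht : t ≠ 0) :
    HasDerivAt (fun t : ℝ => (N : ℝ) / (2 * t)) (-(N : ℝ) / (2 * t ^ 2)) t := by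
  have h := (hasDerivAt_inv ht).const_mul ((N : ℝ) / 2)
  have h1 : (fun t : ℝ => (N : ℝ) / (2 * t)) = fun t => (N : ℝ) / 2 * t⁻¹ := by
    funext t
    rw [div_mul_eq_div_div, div_eq_mul_inv ((N : ℝ) / 2)]
  rw [h1]
  exact h.congr_deriv (by ring)

lemma hatg_zero_zero (N : ℕ) (p : E n) (hp : 0 < p.2) :
    hatg g N 0 0 p = ((N : ℝ) + (2 * p.2 ^ 2 * scal g p - n * p.2)) / (2 * p.2 ^ 3) := by
  change (N : ℝ) / (2 * p.2 ^ 3) + scal g p / p.2 - (n : ℝ) / (2 * p.2 ^ 2) = _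
  field_simp
  ring

lemma pd_succ_hatg_zero_zero (N : ℕ) {p : E n} (hp : 0 < p.2)
    (hR : DifferentiableAt ℝ (scal g) p) (i : Fin n) :
    pd i.succ (hatg g N 0 0) p = pdx i (scal g) p / p.2 := by
  have hψ : DifferentiableAt ℝ (fun t : ℝ => t⁻¹) p.2 := differentiableAt_inv hp.ne'
  have hφ : DifferentiableAt ℝ
      (fun t : ℝ => (N : ℝ) / (2 * t ^ 3) - (n : ℝ) / (2 * t ^ 2)) p.2 := by
    have := hp.ne'
    fun_prop (disch := positivity)
  have hφ' : DifferentiableAt ℝ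
      (fun q : E n => (N : ℝ) / (2 * q.2 ^ 3) - (n : ℝ) / (2 * q.2 ^ 2)) p :=
    hφ.comp p differentiableAt_snd
  have hψ' : DifferentiableAt ℝ (fun q : E n => (q.2)⁻¹) p := hψ.comp p differentiableAt_snd
  have h0 : hatg g N 0 0 = (fun q : E n => (N : ℝ) / (2 * q.2 ^ 3) - (n : ℝ) / (2 * q.2 ^ 2)) +
      scal g * fun q : E n => (q.2)⁻¹ := by
    funext q
    change (N : ℝ) / (2 * q.2 ^ 3) + scal g q / q.2 - (n : ℝ) / (2 * q.2 ^ 2) =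
      (N : ℝ) / (2 * q.2 ^ 3) - (n : ℝ) / (2 * q.2 ^ 2) + scal g q * (q.2)⁻¹
    ring
  have e1 := pd_succ_comp_snd hφ i
  have e2 := pd_succ_comp_snd hψ i
  unfold pd at e1 e2 ⊢
  rw [h0, fderiv_add hφ' (hR.mul hψ'), fderiv_mul hR hψ']
  simp only [add_apply, smul_apply, smul_eq_mul]
  rw [e1, e2]
  simp only [pdx, dir, Fin.cases_succ]
  ring

lemma hatChr_zero_succ_zero (N : ℕ) (p : E n) (i : Fin n) :
    hatChr g N 0 i.succ 0 p = 1 / 2 * ((hatg g N 0 0 p)⁻¹ * pd i.succ (hatg g N 0 0) p) := by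
  unfold hatChr
  rw [Fin.sum_univ_succ]
  simp [hatginv]

/-- The exact mixed Hessian component of `N/(2τ)`: by block diagonality of `ĝ` only the term
`−∂_τ(N/(2τ)) Γ̂⁰_{i0}` contributes. -/
lemma hatHess_succ_zero (N : ℕ) {p : E n} (hp : 0 < p.2)
    (hR : DifferentiableAt ℝ (scal g) p) (i : Fin n) :
    hatHess g N (fun q => (N : ℝ) / (2 * q.2)) i.succ 0 p =
      (N : ℝ) / (2 * p.2 ^ 2) * (1 / 2 * ((hatg g N 0 0 p)⁻¹ * (pdx i (scal g) p / p.2))) := by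
  have hev : (fun q : E n => pd 0 (fun q : E n => (N : ℝ) / (2 * q.2)) q) =ᶠ[nhds p]
      fun q => -(N : ℝ) / (2 * q.2 ^ 2) := by
    filter_upwards [continuous_snd.continuousAt.eventually (lt_mem_nhds hp)] with q hq
    exact pd_zero_comp_snd (hasDerivAt_potential N (ne_of_gt hq))
  have h1 : pd i.succ (fun q : E n => pd 0 (fun q : E n => (N : ℝ) / (2 * q.2)) q) p = 0 := by
    have h2 : DifferentiableAt ℝ (fun t : ℝ => -(N : ℝ) / (2 * t ^ 2)) p.2 := by
      have := hp.ne'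
      fun_prop (disch := positivity)
    have h3 := pd_succ_comp_snd h2 i
    unfold pd at h3 hev ⊢
    rw [hev.fderiv_eq]
    exact h3
  have hpot := hasDerivAt_potential N hp.ne'
  unfold hatHess
  rw [h1, Fin.sum_univ_succ, pd_zero_comp_snd hpot,
    Finset.sum_eq_zero fun j _ => by rw [pd_succ_comp_snd hpot.differentiableAt j, zero_mul],
    hatChr_zero_succ_zero, pd_succ_hatg_zero_zero N hp hR]
  ring

end Hessian

/-- The elementary estimate `|r/2 · N/(N+X) − r/2| ≤ |r| |X| / N`, valid when `2|X| ≤ N`. -/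
lemma mixed_estimate {N X M r D τ : ℝ} (hτ : 0 < τ) (hN : 0 < N) (hX : |X| ≤ M)
    (hM : 2 * M ≤ N) (hr : |r| ≤ D) :
    |N / (2 * τ ^ 2) * (1 / 2 * (((N + X) / (2 * τ ^ 3))⁻¹ * (r / τ))) - 1 / 2 * r|
      ≤ D * M / N := by
  have hX' := abs_le.mp hX
  have hpos : 0 < N + X := by linarith
  have hD : 0 ≤ D := (abs_nonneg r).trans hr
  have h : N / (2 * τ ^ 2) * (1 / 2 * (((N + X) / (2 * τ ^ 3))⁻¹ * (r / τ))) - 1 / 2 * r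
      = -(r * X) / (2 * (N + X)) := by
    field_simp
    ring
  rw [h, abs_div, abs_neg, abs_mul, abs_of_pos (by linarith : 0 < 2 * (N + X))]
  have hM0 : 0 ≤ M := (abs_nonneg X).trans hX
  exact div_le_div₀ (by positivity) (by gcongr) hN (by linarith)

end CanonicalSoliton

open CanonicalSoliton

theorem stmt10 (n : ℕ) (U : Set (Fin n → ℝ)) (hU : IsOpen U)
    (a b : ℝ) (ha : 0 ≤ a) (hab : a < b)
    (g : E n → Matrix (Fin n) (Fin n) ℝ)
    (hsmooth : ∀ i j, ContDiffOn ℝ (⊤ : ℕ∞) (fun p => g p i j) (U ×ˢ Set.Ioo a b))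
    (hsymm : ∀ p ∈ U ×ˢ Set.Ioo a b, (g p).IsSymm)
    (hpos : ∀ p ∈ U ×ˢ Set.Ioo a b, (g p).PosDef)
    (hflow : ∀ p ∈ U ×ˢ Set.Ioo a b, ∀ j k : Fin n,
      pdt (fun q => g q j k) p = 2 * Ric g j k p)
    (hRbd : ∃ C : ℝ, ∀ p ∈ U ×ˢ Set.Ioo a b, |scal g p| ≤ C) :
    ∀ K : Set (E n), K ⊆ U ×ˢ Set.Ioo a b → IsCompact K →
      ∃ N₀ : ℕ, ∃ C : ℝ, 0 < C ∧ ∀ N : ℕ, N₀ ≤ N →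
        (∃ V : Set (E n), IsOpen V ∧ K ⊆ V ∧ V ⊆ U ×ˢ Set.Ioo a b ∧
          ∀ p ∈ V, 0 < hatg g N 0 0 p) ∧
        ∀ p ∈ K, ∀ i : Fin n,
          |hatHess g N (fun q => (N : ℝ) / (2 * q.2)) i.succ 0 p - (1 / 2) * pdx i (scal g) p| ≤ C / (N : ℝ) := by
  intro K hKS hK
  have hS : IsOpen (U ×ˢ Set.Ioo a b) := hU.prod isOpen_Ioo
  have hscal := contDiffOn_scal hS hsmooth hpos
  obtain ⟨B, hB⟩ := hRbd
  have hbd : ∀ i : Fin n, ∃ D : ℝ, ∀ p ∈ K, |pdx i (scal g) p| ≤ D := fun i =>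
    hK.exists_bound_of_continuousOn ((contDiffOn_pdx hS hscal i).continuousOn.mono hKS)
  choose D hD using hbd
  have hDsum : ∀ p ∈ K, ∀ i, |pdx i (scal g) p| ≤ ∑ j, |D j| := fun p hp i =>
    ((hD i p hp).trans (le_abs_self _)).trans
      (Finset.single_le_sum (f := fun j => |D j|) (fun j _ => abs_nonneg _) (Finset.mem_univ i))
  set M : ℝ := 2 * b ^ 2 * |B| + n * b with hM
  have hb : 0 < b := ha.trans_lt hab
  have hM0 : 0 ≤ M := by positivity
  have hX : ∀ p ∈ U ×ˢ Set.Ioo a b, |2 * p.2 ^ 2 * scal g p - n * p.2| ≤ M := by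
    intro p hp
    have hp0 : 0 < p.2 := ha.trans_lt hp.2.1
    have hpb : p.2 ≤ b := hp.2.2.le
    have hR : |scal g p| ≤ |B| := (hB p hp).trans (le_abs_self B)
    calc |2 * p.2 ^ 2 * scal g p - n * p.2|
        ≤ |2 * p.2 ^ 2 * scal g p| + |n * p.2| := abs_sub _ _
      _ = 2 * p.2 ^ 2 * |scal g p| + n * p.2 := by
        rw [abs_mul, abs_of_nonneg (by positivity : 0 ≤ 2 * p.2 ^ 2),
          abs_of_nonneg (by positivity : 0 ≤ (n : ℝ) * p.2)]
      _ ≤ M := by rw [hM]; gcongr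
  obtain ⟨N₀, hN₀⟩ := exists_nat_ge (2 * M + 1)
  refine ⟨N₀, (∑ j, |D j|) * M + 1, by positivity, fun N hN => ?_⟩
  have hNM : 2 * M + 1 ≤ N := hN₀.trans (by exact_mod_cast hN)
  have hNpos : (0 : ℝ) < N := by linarith
  refine ⟨⟨U ×ˢ Set.Ioo a b, hS, hKS, subset_rfl, fun p hp => ?_⟩, fun p hp i => ?_⟩
  · have hp0 : 0 < p.2 := ha.trans_lt hp.2.1
    rw [hatg_zero_zero N p hp0]
    have := (abs_le.mp (hX p hp)).1
    exact div_pos (by linarith) (by positivity)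
  · have hpS := hKS hp
    have hp0 : 0 < p.2 := ha.trans_lt hpS.2.1
    have hR : DifferentiableAt ℝ (scal g) p :=
      (hscal.contDiffAt (hS.mem_nhds hpS)).differentiableAt (by simp)
    rw [hatHess_succ_zero N hp0 hR, hatg_zero_zero N p hp0]
    refine (mixed_estimate hp0 hNpos (hX p hpS) (by linarith) (hDsum p hp i)).trans ?_
    gcongr
    linarith
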